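/- There exists a universal constant c > 0 (the same constant as in the asymptotics (μ * q_t)(x₁, x₂) ~ c (μ * p_t)(x) |log |r|| as x₁, x₂ → x, with r = (x₁ - x₂)/2) such that the following holds. Let μ be a σ-finite Borel measure on ℝ² with μ p_s < ∞ for all s > 0, let t > 0, and let f ≥ 0 be a bounded measurable function on ℝ² × ℝ² with bounded support. Define g_t(x₁, x₂) = (μ * p_t)(x₁)(μ * p_t)(x₂) + (μ * q_t)(x₁, x₂). Then ε^{-4} |log ε|^{-1} ∫_{ℝ²×ℝ²} f(u/ε) g_t(u) du → c · (μ p_t) · ∫_{ℝ²×ℝ²} f dλ⁴ as ε → 0, where λ⁴ denotes Lebesgue measure on ℝ⁴ ≅ ℝ² × ℝ². -/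

import Mathlib

open Filter MeasureTheory

/-- The standard Gaussian density `p_t(x) = (2πt)^{-d/2} exp(-|x|²/(2t))` on `ℝ^d`. -/
noncomputable def gaussDensity (d : ℕ) (t : ℝ) (x : EuclideanSpace ℝ (Fin d)) : ℝ :=
  (2 * Real.pi * t) ^ (-(d : ℝ) / 2) * Real.exp (-‖x‖ ^ 2 / (2 * t))

/-- The covariance density
`q_t(x₁, x₂) = 2 ∫₀^t ∫ p_s(u) p_{t-s}(x₁ - u) p_{t-s}(x₂ - u) du ds`. -/
noncomputable def gaussQ (d : ℕ) (t : ℝ) (x₁ x₂ : EuclideanSpace ℝ (Fin d)) : ℝ :=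
  2 * ∫ s in Set.Ioc (0:ℝ) t,
      ∫ u, gaussDensity d s u * gaussDensity d (t - s) (x₁ - u)
        * gaussDensity d (t - s) (x₂ - u) ∂volume

/-!
By the Chapman–Kolmogorov identity, off the diagonal `μ * q_t` is `1 / (2π)` times the integral
over `0 < τ < t` of `τ⁻¹ exp (-|r|² / τ)` against the value of `μ * p_{t - τ/2}` at the midpoint
`(x₁ + x₂) / 2`, where `r = (x₁ - x₂) / 2`. On the scale `τ = |r|^{2a}` this kernel is
asymptotically `2 |log |r||` times the uniform distribution on `a ∈ [0, 1]`, so that as `r → 0`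
all but a negligible part of its mass lies at times `τ → 0`, where the factor `μ * p_{t - τ/2}`
tends to `(μ * p_t)(x)`. This gives the asymptotics with `c = 1 / π`.

The first term of `g_t` stays bounded, hence `g_t(x₁, x₂) ~ c (μ p_t) |log |r||` near the origin.
After the substitution `u = ε v` the scaling limit follows by dominated convergence, since
`|log (ε |r|)| / |log ε| → 1` and the logarithm of the norm of a nonzero linear map is locally
integrable.
-/

open Set
open scoped Topology

section GaussDensity

variable {d : ℕ} {s t : ℝ} {x : EuclideanSpace ℝ (Fin d)}

lemma gaussDensity_nonneg (ht : 0 ≤ t) (x : EuclideanSpace ℝ (Fin d)) :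
    0 ≤ gaussDensity d t x := by
  unfold gaussDensity
  positivity

lemma gaussDensity_pos (ht : 0 < t) (x : EuclideanSpace ℝ (Fin d)) :
    0 < gaussDensity d t x := by
  unfold gaussDensity
  positivity

lemma gaussDensity_neg (t : ℝ) (x : EuclideanSpace ℝ (Fin d)) :
    gaussDensity d t (-x) = gaussDensity d t x := by
  simp only [gaussDensity, norm_neg]

@[fun_prop]
lemma measurable_gaussDensity {α : Type*} [MeasurableSpace α] {f : α → ℝ}
    {g : α → EuclideanSpace ℝ (Fin d)} (hf : Measurable f) (hg : Measurable g) :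
    Measurable fun a => gaussDensity d (f a) (g a) := by
  unfold gaussDensity
  fun_prop

lemma continuousAt_gaussDensity (ht : 0 < t) (x : EuclideanSpace ℝ (Fin d)) :
    ContinuousAt (fun p : ℝ × EuclideanSpace ℝ (Fin d) => gaussDensity d p.1 p.2) (t, x) := by
  unfold gaussDensity
  fun_prop (disch := simp [ht.ne', Real.pi_ne_zero])

lemma gaussDensity_two (t : ℝ) (x : EuclideanSpace ℝ (Fin 2)) :
    gaussDensity 2 t x = (2 * Real.pi * t)⁻¹ * Real.exp (-‖x‖ ^ 2 / (2 * t)) := by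
  rw [gaussDensity, show -((2 : ℕ) : ℝ) / 2 = -1 by norm_num, Real.rpow_neg_one]

lemma integral_gaussDensity (ht : 0 < t) : ∫ x, gaussDensity d t x = 1 := by
  have hexp (x : EuclideanSpace ℝ (Fin d)) :
      -‖x‖ ^ 2 / (2 * t) = -(2 * t)⁻¹ * ‖x‖ ^ 2 := by ring
  simp only [gaussDensity, hexp]
  rw [integral_const_mul, GaussianFourier.integral_rexp_neg_mul_sq_norm (by positivity),
    finrank_euclideanSpace_fin, div_inv_eq_mul, neg_div, ← mul_assoc, mul_comm Real.pi 2,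
    ← Real.rpow_add (by positivity), neg_add_cancel, Real.rpow_zero]

/- Completing the square: the product is the Gaussian density of the endpoint times that of the
Brownian bridge at time `s`. -/
lemma gaussDensity_mul_gaussDensity_sub (hs : 0 < s) (ht : 0 < t)
    (x u : EuclideanSpace ℝ (Fin d)) :
    gaussDensity d s u * gaussDensity d t (x - u) =
      gaussDensity d (s + t) x * gaussDensity d (s * t / (s + t)) (u - (s / (s + t)) • x) := by
  have hst : s + t ≠ 0 := by positivity
  have hconst : (2 * Real.pi * s) * (2 * Real.pi * t) =
      (2 * Real.pi * (s + t)) * (2 * Real.pi * (s * t / (s + t))) := by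
    field_simp
  have hsquare : -‖u‖ ^ 2 / (2 * s) + -‖x - u‖ ^ 2 / (2 * t) =
      -‖x‖ ^ 2 / (2 * (s + t)) + -‖u - (s / (s + t)) • x‖ ^ 2 / (2 * (s * t / (s + t))) := by
    rw [norm_sub_sq_real, norm_sub_sq_real, norm_smul, inner_smul_right, real_inner_comm,
      Real.norm_of_nonneg (by positivity)]
    field_simp
    ring
  unfold gaussDensity
  rw [mul_mul_mul_comm, ← Real.mul_rpow (by positivity) (by positivity), ← Real.exp_add, hconst,
    hsquare, Real.mul_rpow (by positivity) (by positivity), Real.exp_add, mul_mul_mul_comm]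

lemma integral_gaussDensity_mul_gaussDensity_sub (hs : 0 < s) (ht : 0 < t)
    (x : EuclideanSpace ℝ (Fin d)) :
    ∫ u, gaussDensity d s u * gaussDensity d t (x - u) = gaussDensity d (s + t) x := by
  simp only [gaussDensity_mul_gaussDensity_sub hs ht]
  rw [integral_const_mul, integral_sub_right_eq_self (gaussDensity d (s * t / (s + t))),
    integral_gaussDensity (by positivity), mul_one]

lemma gaussDensity_mul_gaussDensity (ht : 0 < t) (x y : EuclideanSpace ℝ (Fin d)) :
    gaussDensity d t x * gaussDensity d t y =
      gaussDensity d (2 * t) (x - y) * gaussDensity d (t / 2) ((2 : ℝ)⁻¹ • (x + y)) := by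
  have hmid : x - (t / (t + t)) • (x - y) = (2 : ℝ)⁻¹ • (x + y) := by
    rw [show t / (t + t) = 2⁻¹ by field_simp; norm_num]
    module
  have h := gaussDensity_mul_gaussDensity_sub ht ht (x - y) x
  rwa [sub_sub_cancel_left, gaussDensity_neg, hmid, ← two_mul, mul_div_mul_right _ _ ht.ne'] at h

lemma integral_gaussDensity_mul_gaussDensity_sub_mul_gaussDensity_sub (hs : 0 < s) (ht : 0 < t)
    (x₁ x₂ : EuclideanSpace ℝ (Fin d)) :
    ∫ u, gaussDensity d s u * gaussDensity d t (x₁ - u) * gaussDensity d t (x₂ - u) =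
      gaussDensity d (2 * t) (x₁ - x₂) * gaussDensity d (s + t / 2) ((2 : ℝ)⁻¹ • (x₁ + x₂)) := by
  have hmid (u : EuclideanSpace ℝ (Fin d)) :
      (2 : ℝ)⁻¹ • (x₁ - u + (x₂ - u)) = (2 : ℝ)⁻¹ • (x₁ + x₂) - u := by module
  simp only [mul_assoc, gaussDensity_mul_gaussDensity ht, sub_sub_sub_cancel_right, hmid,
    mul_left_comm (gaussDensity d s _)]
  rw [integral_const_mul, integral_gaussDensity_mul_gaussDensity_sub hs (half_pos ht)]

lemma gaussDensity_le_of_ne_zero (ht : 0 < t) (hx : x ≠ 0) :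
    gaussDensity d t x ≤ (d / (2 * Real.pi * ‖x‖ ^ 2)) ^ ((d : ℝ) / 2) := by
  rcases Nat.eq_zero_or_pos d with rfl | hd
  · exact absurd (Subsingleton.elim x 0) hx
  have : 0 < ‖x‖ := norm_pos_iff.2 hx
  set z : ℝ := ‖x‖ ^ 2 / (d * t) with hz
  have hz0 : 0 < z := by positivity
  have hexp : Real.exp (-z) ≤ z⁻¹ := by
    rw [Real.exp_neg]
    exact inv_anti₀ hz0 (by linarith [Real.add_one_le_exp z])
  calc gaussDensity d t x
      = ((2 * Real.pi * t)⁻¹ * Real.exp (-z)) ^ ((d : ℝ) / 2) := by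
        rw [gaussDensity, neg_div (2 : ℝ), Real.rpow_neg (by positivity),
          Real.mul_rpow (x := (2 * Real.pi * t)⁻¹) (by positivity) (by positivity),
          Real.inv_rpow (by positivity), ← Real.exp_mul, hz]
        congr 2
        field_simp
    _ ≤ ((2 * Real.pi * t)⁻¹ * z⁻¹) ^ ((d : ℝ) / 2) := by gcongr
    _ = (d / (2 * Real.pi * ‖x‖ ^ 2)) ^ ((d : ℝ) / 2) := by
        rw [hz]
        congr 1
        field_simp

lemma integrableOn_gaussDensity_const_mul {c : ℝ} (hc : 0 < c) (hx : x ≠ 0) (T : ℝ) :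
    IntegrableOn (fun τ => gaussDensity d (c * τ) x) (Ioo 0 T) := by
  refine Measure.integrableOn_of_bounded (M := (d / (2 * Real.pi * ‖x‖ ^ 2)) ^ ((d : ℝ) / 2))
    measure_Ioo_lt_top.ne (by fun_prop : Measurable _).aestronglyMeasurable ?_
  filter_upwards [ae_restrict_mem measurableSet_Ioo] with τ hτ
  have hcτ : 0 < c * τ := mul_pos hc hτ.1
  rw [Real.norm_of_nonneg (gaussDensity_nonneg hcτ.le x)]
  exact gaussDensity_le_of_ne_zero hcτ hx

lemma norm_sq_div_le_norm_sub_sq_div_add {E : Type*} [SeminormedAddCommGroup E]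
    (ht : 0 < t) (hts : t < s) (x u : E) :
    ‖u‖ ^ 2 / s ≤ ‖x - u‖ ^ 2 / t + ‖x‖ ^ 2 / (s - t) := by
  have htriangle : ‖u‖ ≤ ‖x - u‖ + ‖x‖ := by
    simpa [norm_sub_rev, add_comm] using norm_add_le (u - x) x
  have htitu := Finset.sq_sum_div_le_sum_sq_div Finset.univ ![‖x - u‖, ‖x‖] (g := ![t, s - t])
    (by simp [Fin.forall_fin_two, ht, hts])
  simp only [Fin.sum_univ_two, Matrix.cons_val_zero, Matrix.cons_val_one,
    add_sub_cancel] at htitu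
  have hs : 0 < s := ht.trans hts
  exact le_trans (by gcongr) htitu

lemma gaussDensity_sub_le (ht : 0 < t) (hts : t < s) (x u : EuclideanSpace ℝ (Fin d)) :
    gaussDensity d t (x - u) ≤
      (s / t) ^ ((d : ℝ) / 2) * Real.exp (‖x‖ ^ 2 / (2 * (s - t))) * gaussDensity d s u := by
  have hs : 0 < s := ht.trans hts
  have hconst : (2 * Real.pi * t) ^ (-(d : ℝ) / 2) =
      (s / t) ^ ((d : ℝ) / 2) * (2 * Real.pi * s) ^ (-(d : ℝ) / 2) := by
    rw [neg_div, Real.rpow_neg (by positivity), Real.rpow_neg (by positivity),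
      ← Real.inv_rpow (by positivity), ← Real.inv_rpow (by positivity),
      ← Real.mul_rpow (by positivity) (by positivity)]
    congr 1
    field_simp
  have hexp : -‖x - u‖ ^ 2 / (2 * t) ≤ ‖x‖ ^ 2 / (2 * (s - t)) + -‖u‖ ^ 2 / (2 * s) := by
    have h := norm_sq_div_le_norm_sub_sq_div_add ht hts x u
    simp only [neg_div, div_mul_eq_div_div_swap _ (2 : ℝ)]
    linarith
  calc gaussDensity d t (x - u)
      ≤ (2 * Real.pi * t) ^ (-(d : ℝ) / 2) *
          Real.exp (‖x‖ ^ 2 / (2 * (s - t)) + -‖u‖ ^ 2 / (2 * s)) := by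
        unfold gaussDensity
        gcongr
    _ = (s / t) ^ ((d : ℝ) / 2) * Real.exp (‖x‖ ^ 2 / (2 * (s - t))) * gaussDensity d s u := by
        rw [hconst, Real.exp_add, gaussDensity]
        ring

end GaussDensity

section GaussQ

variable {d : ℕ} {t : ℝ}

lemma gaussQ_nonneg (t : ℝ) (x₁ x₂ : EuclideanSpace ℝ (Fin d)) : 0 ≤ gaussQ d t x₁ x₂ := by
  refine mul_nonneg zero_le_two (setIntegral_nonneg measurableSet_Ioc fun s hs => ?_)
  refine integral_nonneg fun u => mul_nonneg (mul_nonneg ?_ ?_) ?_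
  · exact gaussDensity_nonneg hs.1.le u
  all_goals exact gaussDensity_nonneg (sub_nonneg.2 hs.2) _

@[fun_prop]
lemma measurable_gaussQ {α : Type*} [MeasurableSpace α] {f g : α → EuclideanSpace ℝ (Fin d)}
    (hf : Measurable f) (hg : Measurable g) :
    Measurable fun a => gaussQ d t (f a) (g a) := by
  have hinner : StronglyMeasurable fun p : α × ℝ =>
      ∫ u, gaussDensity d p.2 u * gaussDensity d (t - p.2) (f p.1 - u) *
        gaussDensity d (t - p.2) (g p.1 - u) :=
    StronglyMeasurable.integral_prod_right (ν := volume)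
      (f := fun (p : α × ℝ) u => gaussDensity d p.2 u * gaussDensity d (t - p.2) (f p.1 - u) *
        gaussDensity d (t - p.2) (g p.1 - u)) (by fun_prop : Measurable _).stronglyMeasurable
  exact hinner.integral_prod_right'.measurable.const_mul 2

lemma gaussQ_eq_integral (ht : 0 ≤ t) (x₁ x₂ : EuclideanSpace ℝ (Fin d)) :
    gaussQ d t x₁ x₂ = 2 * ∫ τ in Ioo 0 t,
      gaussDensity d (2 * τ) (x₁ - x₂) * gaussDensity d (t - τ / 2) ((2 : ℝ)⁻¹ • (x₁ + x₂)) := by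
  set F : ℝ → ℝ := fun τ =>
    gaussDensity d (2 * τ) (x₁ - x₂) * gaussDensity d (t - τ / 2) ((2 : ℝ)⁻¹ • (x₁ + x₂))
  have hreflect : ∫ s in Ioo 0 t, F (t - s) = ∫ τ in Ioo 0 t, F τ := by
    simp only [← integral_Ioc_eq_integral_Ioo, ← intervalIntegral.integral_of_le ht]
    simp
  rw [gaussQ, integral_Ioc_eq_integral_Ioo, ← hreflect]
  congr 1
  refine setIntegral_congr_fun measurableSet_Ioo fun s hs => ?_
  have hmid : s + (t - s) / 2 = t - (t - s) / 2 := by ring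
  simp only [F, ← hmid]
  exact integral_gaussDensity_mul_gaussDensity_sub_mul_gaussDensity_sub hs.1 (sub_pos.2 hs.2) x₁ x₂

end GaussQ

section GaussConv

variable {d : ℕ} {s t : ℝ} {μ : Measure (EuclideanSpace ℝ (Fin d))}

/-- The convolution `(μ * p_t)(x)`, an integral of a nonnegative function with junk value `0` where
it diverges. -/
noncomputable def gaussConv (μ : Measure (EuclideanSpace ℝ (Fin d))) (t : ℝ)
    (x : EuclideanSpace ℝ (Fin d)) : ℝ :=
  (∫⁻ u, ENNReal.ofReal (gaussDensity d t (x - u)) ∂μ).toReal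

/-- The convolution `(μ * q_t)(x₁, x₂)`, an integral of a nonnegative function with junk value `0`
where it diverges. -/
noncomputable def gaussQConv (μ : Measure (EuclideanSpace ℝ (Fin d))) (t : ℝ)
    (x₁ x₂ : EuclideanSpace ℝ (Fin d)) : ℝ :=
  (∫⁻ u, ENNReal.ofReal (gaussQ d t (x₁ - u) (x₂ - u)) ∂μ).toReal

/-- The second moment density `g_t` of the Dawson–Watanabe superprocess started from `μ`. -/
noncomputable def gaussSecondMoment (μ : Measure (EuclideanSpace ℝ (Fin d))) (t : ℝ)
    (q : EuclideanSpace ℝ (Fin d) × EuclideanSpace ℝ (Fin d)) : ℝ :=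
  gaussConv μ t q.1 * gaussConv μ t q.2 + gaussQConv μ t q.1 q.2

lemma gaussConv_eq_integral (μ : Measure (EuclideanSpace ℝ (Fin d))) (ht : 0 ≤ t)
    (x : EuclideanSpace ℝ (Fin d)) : gaussConv μ t x = ∫ u, gaussDensity d t (x - u) ∂μ :=
  (integral_eq_lintegral_of_nonneg_ae (.of_forall fun u => gaussDensity_nonneg ht (x - u))
    (by fun_prop : Measurable _).aestronglyMeasurable).symm

lemma gaussQConv_eq_integral (μ : Measure (EuclideanSpace ℝ (Fin d))) (t : ℝ)
    (x₁ x₂ : EuclideanSpace ℝ (Fin d)) :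
    gaussQConv μ t x₁ x₂ = ∫ u, gaussQ d t (x₁ - u) (x₂ - u) ∂μ :=
  (integral_eq_lintegral_of_nonneg_ae (.of_forall fun u => gaussQ_nonneg t _ _)
    (by fun_prop : Measurable _).aestronglyMeasurable).symm

lemma gaussConv_zero (μ : Measure (EuclideanSpace ℝ (Fin d))) (t : ℝ) :
    gaussConv μ t 0 = (∫⁻ u, ENNReal.ofReal (gaussDensity d t u) ∂μ).toReal := by
  simp only [gaussConv, zero_sub, gaussDensity_neg]

lemma integrable_gaussDensity_of_lintegral_lt_top (ht : 0 ≤ t)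
    (h : ∫⁻ u, ENNReal.ofReal (gaussDensity d t u) ∂μ < ⊤) : Integrable (gaussDensity d t) μ :=
  ⟨(by fun_prop : Measurable _).aestronglyMeasurable,
    (hasFiniteIntegral_iff_ofReal (.of_forall (gaussDensity_nonneg ht))).2 h⟩

lemma sigmaFinite_of_integrable_of_ne_zero {α E : Type*} [MeasurableSpace α]
    [NormedAddCommGroup E] {ν : Measure α} {g : α → E} (hg : Integrable g ν)
    (hg0 : ∀ a, g a ≠ 0) : SigmaFinite ν := by
  obtain ⟨S, hS, hzero, hfinite⟩ :=
    ((memLp_one_iff_integrable.2 hg).aefinStronglyMeasurable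
      one_ne_zero ENNReal.one_ne_top).exists_set_sigmaFinite
  have hνS : ν.restrict Sᶜ = 0 := by
    rw [← ae_eq_bot, ← eventually_false_iff_eq_bot]
    exact hzero.mono hg0
  have hν : ν.restrict S = ν := by
    simpa only [hνS, add_zero] using Measure.restrict_add_restrict_compl (μ := ν) hS
  rwa [hν] at hfinite

lemma sigmaFinite_of_integrable_gaussDensity (ht : 0 < t) (h : Integrable (gaussDensity d t) μ) :
    SigmaFinite μ :=
  sigmaFinite_of_integrable_of_ne_zero h fun u => (gaussDensity_pos ht u).ne'

@[fun_prop]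
lemma measurable_gaussConv [SFinite μ] {α : Type*} [MeasurableSpace α] {f : α → ℝ}
    {g : α → EuclideanSpace ℝ (Fin d)} (hf : Measurable f) (hg : Measurable g) :
    Measurable fun a => gaussConv μ (f a) (g a) :=
  (Measurable.lintegral_prod_right'
    (f := fun p : α × EuclideanSpace ℝ (Fin d) =>
      ENNReal.ofReal (gaussDensity d (f p.1) (g p.1 - p.2))) (by fun_prop)).ennreal_toReal

lemma measurable_gaussSecondMoment [SFinite μ] (t : ℝ) :
    Measurable (gaussSecondMoment μ t) := by
  have : Measurable fun q : EuclideanSpace ℝ (Fin d) × EuclideanSpace ℝ (Fin d) =>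
      gaussQConv μ t q.1 q.2 :=
    (Measurable.lintegral_prod_right'
      (f := fun p : (EuclideanSpace ℝ (Fin d) × EuclideanSpace ℝ (Fin d)) × _ =>
        ENNReal.ofReal (gaussQ d t (p.1.1 - p.2) (p.1.2 - p.2))) (by fun_prop)).ennreal_toReal
  unfold gaussSecondMoment
  fun_prop

lemma integrable_gaussDensity_sub (ht : 0 < t) (hts : t < s)
    (hμ : Integrable (gaussDensity d s) μ) (x : EuclideanSpace ℝ (Fin d)) :
    Integrable (fun u => gaussDensity d t (x - u)) μ := by
  refine Integrable.mono'
    (hμ.const_mul ((s / t) ^ ((d : ℝ) / 2) * Real.exp (‖x‖ ^ 2 / (2 * (s - t)))))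
    (by fun_prop : Measurable _).aestronglyMeasurable (.of_forall fun u => ?_)
  rw [Real.norm_of_nonneg (gaussDensity_nonneg ht.le _)]
  exact gaussDensity_sub_le ht hts x u

lemma continuousAt_gaussConv (ht : 0 < t) (hts : t < s) (hμ : Integrable (gaussDensity d s) μ)
    (x : EuclideanSpace ℝ (Fin d)) :
    ContinuousAt (fun p : ℝ × EuclideanSpace ℝ (Fin d) => gaussConv μ p.1 p.2) (t, x) := by
  set K : ℝ × EuclideanSpace ℝ (Fin d) → ℝ := fun p =>
    (s / p.1) ^ ((d : ℝ) / 2) * Real.exp (‖p.2‖ ^ 2 / (2 * (s - p.1)))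
  have hpos : ∀ᶠ p : ℝ × EuclideanSpace ℝ (Fin d) in 𝓝 (t, x), 0 < p.1 :=
    continuousAt_fst.eventually_const_lt ht
  have hlt : ∀ᶠ p : ℝ × EuclideanSpace ℝ (Fin d) in 𝓝 (t, x), p.1 < s :=
    continuousAt_fst.eventually_lt_const hts
  have hK : ContinuousAt K (t, x) := by
    have hs : s ≠ 0 := (ht.trans hts).ne'
    have hst : s - t ≠ 0 := (sub_pos.2 hts).ne'
    fun_prop (disch := simp [ht.ne', hs, hst])
  have hbound : ∀ᶠ p in 𝓝 (t, x), K p < K (t, x) + 1 := hK.eventually_lt_const (lt_add_one _)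
  have hcongr : (fun p : ℝ × EuclideanSpace ℝ (Fin d) => gaussConv μ p.1 p.2) =ᶠ[𝓝 (t, x)]
      fun p => ∫ u, gaussDensity d p.1 (p.2 - u) ∂μ :=
    hpos.mono fun p hp => gaussConv_eq_integral μ hp.le p.2
  refine (continuousAt_congr hcongr).2 <| continuousAt_of_dominated
    (bound := fun u => (K (t, x) + 1) * gaussDensity d s u)
    (.of_forall fun p => (by fun_prop : Measurable _).aestronglyMeasurable) ?_
    (hμ.const_mul _) (.of_forall fun u => ?_)
  · filter_upwards [hpos, hlt, hbound] with p hp₀ hps hpK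
    refine .of_forall fun u => ?_
    rw [Real.norm_of_nonneg (gaussDensity_nonneg hp₀.le _)]
    have := gaussDensity_nonneg (ht.trans hts).le u
    exact (gaussDensity_sub_le hp₀ hps p.2 u).trans (by gcongr)
  · exact ContinuousAt.comp (x := (t, x)) (f := fun p => (p.1, p.2 - u))
      (continuousAt_gaussDensity ht (x - u)) (by fun_prop)

lemma tendsto_gaussConv (ht : 0 < t) (hts : t < s) (hμ : Integrable (gaussDensity d s) μ)
    {ι : Type*} {F : Filter ι} {τ : ι → ℝ} {y : ι → EuclideanSpace ℝ (Fin d)}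
    {x : EuclideanSpace ℝ (Fin d)} (hτ : Tendsto τ F (𝓝 t)) (hy : Tendsto y F (𝓝 x)) :
    Tendsto (fun i => gaussConv μ (τ i) (y i)) F (𝓝 (gaussConv μ t x)) := by
  have hpair : Tendsto (fun i => (τ i, y i)) F (𝓝 (t, x)) := hτ.prodMk_nhds hy
  simpa only [Function.comp_def] using (continuousAt_gaussConv ht hts hμ x).tendsto.comp hpair

lemma exists_gaussConv_le {a b R : ℝ} (ha : 0 < a) (hbs : b < s)
    (hμ : Integrable (gaussDensity d s) μ) :
    ∃ C, ∀ τ ∈ Icc a b, ∀ x : EuclideanSpace ℝ (Fin d), ‖x‖ ≤ R → |gaussConv μ τ x| ≤ C := by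
  have hcont : ContinuousOn (fun p : ℝ × EuclideanSpace ℝ (Fin d) => gaussConv μ p.1 p.2)
      (Icc a b ×ˢ Metric.closedBall 0 R) := fun p hp =>
    (continuousAt_gaussConv (ha.trans_le hp.1.1) (hp.1.2.trans_lt hbs) hμ
      p.2).continuousWithinAt
  obtain ⟨C, hC⟩ := (isCompact_Icc.prod (isCompact_closedBall 0 R)).exists_bound_of_continuousOn
    hcont
  exact ⟨C, fun τ hτ x hx => hC (τ, x) ⟨hτ, mem_closedBall_zero_iff.2 hx⟩⟩

lemma integrable_prod_gaussDensity_mul_gaussDensity_sub [SFinite μ] (ht : 0 < t) (hts : t < s)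
    (hμ : Integrable (gaussDensity d s) μ) {z : EuclideanSpace ℝ (Fin d)} (hz : z ≠ 0)
    (x : EuclideanSpace ℝ (Fin d)) :
    Integrable (fun p : EuclideanSpace ℝ (Fin d) × ℝ =>
      gaussDensity d (2 * p.2) z * gaussDensity d (t - p.2 / 2) (x - p.1))
      (μ.prod (volume.restrict (Ioo 0 t))) := by
  have hmem : ∀ᵐ τ ∂volume.restrict (Ioo 0 t), τ ∈ Ioo 0 t := ae_restrict_mem measurableSet_Ioo
  obtain ⟨C, hC⟩ := exists_gaussConv_le (R := ‖x‖) (half_pos ht) hts hμ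
  refine (integrable_prod_iff' (by fun_prop : Measurable _).aestronglyMeasurable).2 ⟨?_, ?_⟩
  · filter_upwards [hmem] with τ ⟨hτ₀, hτt⟩
    exact (integrable_gaussDensity_sub (by linarith) (by linarith) hμ x).const_mul _
  · have hbound : Integrable (fun τ => gaussDensity d (2 * τ) z * gaussConv μ (t - τ / 2) x)
        (volume.restrict (Ioo 0 t)) := by
      refine (integrableOn_gaussDensity_const_mul two_pos hz t).mul_bdd (c := C)
        (by fun_prop : Measurable _).aestronglyMeasurable ?_
      filter_upwards [hmem] with τ ⟨hτ₀, hτt⟩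
      exact hC _ ⟨by linarith, by linarith⟩ x le_rfl
    refine hbound.congr ?_
    filter_upwards [hmem] with τ ⟨hτ₀, hτt⟩
    have hτ : 0 ≤ t - τ / 2 := by linarith
    rw [gaussConv_eq_integral μ hτ, ← integral_const_mul]
    exact integral_congr_ae (.of_forall fun u => (Real.norm_of_nonneg
      (mul_nonneg (gaussDensity_nonneg (by positivity) z) (gaussDensity_nonneg hτ _))).symm)

lemma gaussQConv_eq_integral_gaussConv [SFinite μ] (ht : 0 < t) (hts : t < s)
    (hμ : Integrable (gaussDensity d s) μ) {x₁ x₂ : EuclideanSpace ℝ (Fin d)} (hx : x₁ ≠ x₂) :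
    gaussQConv μ t x₁ x₂ = 2 * ∫ τ in Ioo 0 t, gaussDensity d (2 * τ) (x₁ - x₂) *
      gaussConv μ (t - τ / 2) ((2 : ℝ)⁻¹ • (x₁ + x₂)) := by
  have hmid (u : EuclideanSpace ℝ (Fin d)) :
      (2 : ℝ)⁻¹ • (x₁ - u + (x₂ - u)) = (2 : ℝ)⁻¹ • (x₁ + x₂) - u := by module
  rw [gaussQConv_eq_integral]
  simp only [gaussQ_eq_integral ht.le, sub_sub_sub_cancel_right, hmid]
  rw [integral_const_mul, integral_integral_swap
    (integrable_prod_gaussDensity_mul_gaussDensity_sub ht hts hμ (sub_ne_zero.2 hx) _)]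
  congr 1
  refine setIntegral_congr_fun measurableSet_Ioo fun τ hτ => ?_
  have hτt : 0 ≤ t - τ / 2 := by linarith [hτ.1, hτ.2]
  simp only [integral_const_mul, gaussConv_eq_integral μ hτt]

lemma gaussQConv_two_eq_integral_gaussConv {μ : Measure (EuclideanSpace ℝ (Fin 2))} [SFinite μ]
    (ht : 0 < t) (hts : t < s) (hμ : Integrable (gaussDensity 2 s) μ)
    {x₁ x₂ : EuclideanSpace ℝ (Fin 2)} (hx : x₁ ≠ x₂) :
    gaussQConv μ t x₁ x₂ = (2 * Real.pi)⁻¹ * ∫ τ in Ioo 0 t,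
      τ⁻¹ * Real.exp (-‖(2 : ℝ)⁻¹ • (x₁ - x₂)‖ ^ 2 / τ) *
        gaussConv μ (t - τ / 2) ((2 : ℝ)⁻¹ • (x₁ + x₂)) := by
  rw [gaussQConv_eq_integral_gaussConv ht hts hμ hx, ← integral_const_mul, ← integral_const_mul]
  refine setIntegral_congr_fun measurableSet_Ioo fun τ hτ => ?_
  have hexp : -‖(2 : ℝ)⁻¹ • (x₁ - x₂)‖ ^ 2 / τ = -‖x₁ - x₂‖ ^ 2 / (2 * (2 * τ)) := by
    rw [norm_smul, norm_inv, Real.norm_two]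
    ring
  simp only [gaussDensity_two, hexp]
  have := hτ.1.ne'
  field_simp

end GaussConv

section LogarithmicKernel

variable {E : Type*} [NormedAddCommGroup E] [NormedSpace ℝ E] {t : ℝ}

lemma setIntegral_Ioo_inv_smul (ht : 0 < t) (g : ℝ → E) :
    ∫ τ in Ioo 0 t, τ⁻¹ • g τ = ∫ y in Ioi (-Real.log t), g (Real.exp (-y)) := by
  have himage : Real.exp '' Iio (Real.log t) = Ioo 0 t := by
    rw [Real.image_exp_Iio, Real.exp_log ht]
  rw [← himage, integral_image_eq_integral_abs_deriv_smul measurableSet_Iio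
    (fun x _ => (Real.hasDerivAt_exp x).hasDerivWithinAt) Real.exp_injective.injOn,
    integral_comp_neg_Ioi (-Real.log t) fun y => g (Real.exp y), neg_neg,
    ← integral_Iic_eq_integral_Iio]
  simp only [abs_of_pos (Real.exp_pos _), smul_inv_smul₀ (Real.exp_pos _).ne']

lemma exp_neg_exp_mul_sub_one_le {Λ : ℝ} (hΛ : 1 ≤ Λ) (a : ℝ) :
    Real.exp (-Real.exp (Λ * (a - 1))) ≤ Real.exp (1 - a) := by
  rw [Real.exp_le_exp]
  rcases le_total a 1 with ha | ha
  · linarith [Real.exp_pos (Λ * (a - 1))]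
  · nlinarith [Real.add_one_le_exp (Λ * (a - 1))]

lemma tendsto_exp_neg_exp_mul_sub_one_of_lt {a : ℝ} (ha : a < 1) :
    Tendsto (fun Λ : ℝ => Real.exp (-Real.exp (Λ * (a - 1)))) atTop (𝓝 1) := by
  have h : Tendsto (fun Λ : ℝ => Real.exp (Λ * (a - 1))) atTop (𝓝 0) :=
    Real.tendsto_exp_atBot.comp (tendsto_id.atTop_mul_const_of_neg (sub_neg.2 ha))
  simpa only [Function.comp_def, neg_zero, Real.exp_zero] using
    (Real.continuous_exp.tendsto _).comp h.neg

lemma tendsto_exp_neg_exp_mul_sub_one_of_gt {a : ℝ} (ha : 1 < a) :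
    Tendsto (fun Λ : ℝ => Real.exp (-Real.exp (Λ * (a - 1)))) atTop (𝓝 0) :=
  Real.tendsto_exp_neg_atTop_nhds_zero.comp <|
    Real.tendsto_exp_atTop.comp (tendsto_id.atTop_mul_const (sub_pos.2 ha))

/-- The integrand `a ↦ Λ⁻¹ (τ⁻¹ exp (-σ / τ) h τ) |dτ / da|`, `0 < τ < t`, on the logarithmic scale
`τ = exp (-Λ a) = σ ^ a`, where `Λ = -log σ`. -/
noncomputable def logScaleIntegrand (t Λ : ℝ) (h : ℝ → E) : ℝ → E :=
  indicator (Ioi (-Real.log t / Λ)) fun a =>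
    Real.exp (-Real.exp (Λ * (a - 1))) • h (Real.exp (-(Λ * a)))

lemma integral_inv_mul_exp_neg_div_smul {σ : ℝ} (ht : 0 < t) (hσ₀ : 0 < σ) (hσ₁ : σ < 1)
    (h : ℝ → E) :
    |Real.log σ|⁻¹ • ∫ τ in Ioo 0 t, (τ⁻¹ * Real.exp (-σ / τ)) • h τ =
      ∫ a, logScaleIntegrand t |Real.log σ| h a := by
  set Λ : ℝ := |Real.log σ| with hΛ
  have hσ : σ = Real.exp (-Λ) := by
    rw [hΛ, abs_of_neg (Real.log_neg hσ₀ hσ₁), neg_neg, Real.exp_log hσ₀]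
  have hΛ₀ : 0 < Λ := abs_pos.2 (Real.log_neg hσ₀ hσ₁).ne
  have hexp (a : ℝ) : -σ / Real.exp (-(Λ * a)) = -Real.exp (Λ * (a - 1)) := by
    rw [hσ, neg_div, ← Real.exp_sub]
    ring_nf
  have hscale := integral_comp_mul_left_Ioi
    (fun y => Real.exp (-σ / Real.exp (-y)) • h (Real.exp (-y))) (-Real.log t / Λ) hΛ₀
  rw [mul_div_cancel₀ _ hΛ₀.ne'] at hscale
  simp only [mul_smul]
  rw [setIntegral_Ioo_inv_smul ht fun τ => Real.exp (-σ / τ) • h τ, ← hscale]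
  simp only [logScaleIntegrand, integral_indicator measurableSet_Ioi, hexp]

lemma norm_logScaleIntegrand_le {Λ C : ℝ} (ht : 0 < t) (hΛ : 1 ≤ Λ) {h : ℝ → E}
    (hC : ∀ τ ∈ Ioo 0 t, ‖h τ‖ ≤ C) (a : ℝ) :
    ‖logScaleIntegrand t Λ h a‖ ≤
      indicator (Ioi (-|Real.log t|)) (fun a => Real.exp (1 - a) * C) a := by
  have hΛ₀ : 0 < Λ := one_pos.trans_le hΛ
  have hC₀ : 0 ≤ C := (norm_nonneg _).trans (hC (t / 2) ⟨half_pos ht, half_lt_self ht⟩)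
  have hcut : -|Real.log t| ≤ -Real.log t / Λ := by
    rw [neg_div]
    refine neg_le_neg ((le_abs_self _).trans ?_)
    rw [abs_div, abs_of_pos hΛ₀]
    exact div_le_self (abs_nonneg _) hΛ
  by_cases ha : a ∈ Ioi (-Real.log t / Λ)
  · have hτ : Real.exp (-(Λ * a)) < t := by
      rw [← Real.lt_log_iff_exp_lt ht]
      linarith [(div_lt_iff₀' hΛ₀).1 ha]
    rw [logScaleIntegrand, indicator_of_mem ha, indicator_of_mem (Ioi_subset_Ioi hcut ha),
      norm_smul, Real.norm_of_nonneg (Real.exp_pos _).le]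
    exact mul_le_mul (exp_neg_exp_mul_sub_one_le hΛ a) (hC _ ⟨Real.exp_pos _, hτ⟩)
      (norm_nonneg _) (Real.exp_pos _).le
  · rw [logScaleIntegrand, indicator_of_notMem ha, norm_zero]
    exact indicator_nonneg (fun _ _ => by positivity) a

lemma tendsto_logScaleIntegrand {ι : Type*} {F : Filter ι} {Λ : ι → ℝ} {h : ι → ℝ → E} {L : E}
    (hΛ : Tendsto Λ F atTop)
    (hlim : Tendsto (fun p : ι × ℝ => h p.1 p.2) (F ×ˢ 𝓝[>] 0) (𝓝 L)) {a : ℝ} (ha₀ : a ≠ 0)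
    (ha₁ : a ≠ 1) :
    Tendsto (fun i => logScaleIntegrand t (Λ i) (h i) a) F
      (𝓝 (indicator (Ioo 0 1) (fun _ => L) a)) := by
  have hcut : Tendsto (fun i => -Real.log t / Λ i) F (𝓝 0) := hΛ.const_div_atTop _
  rcases ha₀.lt_or_gt with ha₀ | ha₀
  · rw [indicator_of_notMem fun h => ha₀.not_gt h.1]
    refine tendsto_const_nhds.congr' ?_
    filter_upwards [hcut.eventually_const_lt ha₀] with i hi
    exact (indicator_of_notMem hi.not_gt _).symm
  have hτ : Tendsto (fun i => Real.exp (-(Λ i * a))) F (𝓝[>] 0) :=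
    tendsto_nhdsWithin_iff.2 ⟨Real.tendsto_exp_neg_atTop_nhds_zero.comp (hΛ.atTop_mul_const ha₀),
      .of_forall fun _ => Real.exp_pos _⟩
  have hh : Tendsto (fun i => h i (Real.exp (-(Λ i * a)))) F (𝓝 L) :=
    hlim.comp (tendsto_id.prodMk hτ)
  have hind : (fun i => logScaleIntegrand t (Λ i) (h i) a) =ᶠ[F]
      fun i => Real.exp (-Real.exp (Λ i * (a - 1))) • h i (Real.exp (-(Λ i * a))) := by
    filter_upwards [hcut.eventually_lt_const ha₀] with i hi
    exact indicator_of_mem hi _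
  refine Tendsto.congr' hind.symm ?_
  rcases ha₁.lt_or_gt with ha₁ | ha₁
  · rw [indicator_of_mem (show a ∈ Ioo 0 1 from ⟨ha₀, ha₁⟩)]
    simpa only [Function.comp_apply, one_smul] using
      ((tendsto_exp_neg_exp_mul_sub_one_of_lt ha₁).comp hΛ).smul hh
  · rw [indicator_of_notMem fun h => ha₁.not_gt h.2]
    simpa only [Function.comp_apply, zero_smul] using
      ((tendsto_exp_neg_exp_mul_sub_one_of_gt ha₁).comp hΛ).smul hh

lemma tendsto_integral_inv_mul_exp_neg_div_smul [CompleteSpace E] {ι : Type*} {F : Filter ι}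
    [F.IsCountablyGenerated] {σ : ι → ℝ} {h : ι → ℝ → E} {L : E} {C : ℝ} (ht : 0 < t)
    (hσ : Tendsto σ F (𝓝[>] 0)) (hmeas : ∀ i, StronglyMeasurable (h i))
    (hbound : ∀ᶠ i in F, ∀ τ ∈ Ioo 0 t, ‖h i τ‖ ≤ C)
    (hlim : Tendsto (fun p : ι × ℝ => h p.1 p.2) (F ×ˢ 𝓝[>] 0) (𝓝 L)) :
    Tendsto (fun i => |Real.log (σ i)|⁻¹ •
      ∫ τ in Ioo 0 t, (τ⁻¹ * Real.exp (-σ i / τ)) • h i τ) F (𝓝 L) := by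
  have hΛ : Tendsto (fun i => |Real.log (σ i)|) F atTop :=
    tendsto_abs_atBot_atTop.comp (Real.tendsto_log_nhdsGT_zero.comp hσ)
  have hrescale : (fun i => |Real.log (σ i)|⁻¹ •
      ∫ τ in Ioo 0 t, (τ⁻¹ * Real.exp (-σ i / τ)) • h i τ) =ᶠ[F]
        fun i => ∫ a, logScaleIntegrand t |Real.log (σ i)| (h i) a := by
    filter_upwards [hσ.eventually self_mem_nhdsWithin,
      (hσ.mono_right nhdsWithin_le_nhds).eventually_lt_const one_pos] with i hσ₀ hσ₁
    exact integral_inv_mul_exp_neg_div_smul ht hσ₀ hσ₁ (h i)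
  have hL : ∫ a, indicator (Ioo (0 : ℝ) 1) (fun _ => L) a = L := by
    rw [integral_indicator_const L measurableSet_Ioo]
    simp
  rw [tendsto_congr' hrescale, ← hL]
  refine tendsto_integral_filter_of_dominated_convergence
    (indicator (Ioi (-|Real.log t|)) fun a => Real.exp (1 - a) * C)
    (.of_forall fun i => ?_) ?_ ?_ ?_
  · refine StronglyMeasurable.aestronglyMeasurable (.indicator (.smul ?_ ?_) measurableSet_Ioi)
    · exact (by fun_prop : Measurable _).stronglyMeasurable
    · exact (hmeas i).comp_measurable (by fun_prop)
  · filter_upwards [hΛ.eventually_ge_atTop 1, hbound] with i hi hC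
    exact .of_forall (norm_logScaleIntegrand_le ht hi hC)
  · rw [integrable_indicator_iff measurableSet_Ioi]
    simpa only [sub_eq_add_neg, Real.exp_add, IntegrableOn] using
      ((integrableOn_exp_neg_Ioi _).const_mul (Real.exp 1)).mul_const C
  · filter_upwards [Measure.ae_ne volume 0, Measure.ae_ne volume 1] with a ha₀ ha₁
    exact tendsto_logScaleIntegrand hΛ hlim ha₀ ha₁

end LogarithmicKernel

section DimTwo

variable {μ : Measure (EuclideanSpace ℝ (Fin 2))} [SFinite μ] {s t : ℝ}

lemma tendsto_norm_half_smul_sub_nhdsWithin {E : Type*} [NormedAddCommGroup E] [NormedSpace ℝ E]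
    (x : E) :
    Tendsto (fun q : E × E => ‖(2 : ℝ)⁻¹ • (q.1 - q.2)‖) (𝓝[{q | q.1 ≠ q.2}] (x, x)) (𝓝[>] 0) := by
  refine tendsto_nhdsWithin_iff.2 ⟨?_, ?_⟩
  · have hcont : ContinuousAt (fun q : E × E => ‖(2 : ℝ)⁻¹ • (q.1 - q.2)‖) (x, x) := by fun_prop
    simpa [ContinuousAt] using hcont.tendsto.mono_left nhdsWithin_le_nhds
  · filter_upwards [self_mem_nhdsWithin] with q hq
    exact norm_pos_iff.2 (smul_ne_zero (by norm_num) (sub_ne_zero.2 hq))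

lemma tendsto_gaussQConv_div_abs_log (ht : 0 < t) (hts : t < s)
    (hμ : Integrable (gaussDensity 2 s) μ) (x : EuclideanSpace ℝ (Fin 2)) :
    Tendsto (fun q : EuclideanSpace ℝ (Fin 2) × EuclideanSpace ℝ (Fin 2) =>
        gaussQConv μ t q.1 q.2 / |Real.log ‖(2 : ℝ)⁻¹ • (q.1 - q.2)‖|)
      (𝓝[{q | q.1 ≠ q.2}] (x, x)) (𝓝 (Real.pi⁻¹ * gaussConv μ t x)) := by
  set F := 𝓝[{q : EuclideanSpace ℝ (Fin 2) × EuclideanSpace ℝ (Fin 2) | q.1 ≠ q.2}] (x, x)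
  set mid : EuclideanSpace ℝ (Fin 2) × EuclideanSpace ℝ (Fin 2) → EuclideanSpace ℝ (Fin 2) :=
    fun q => (2 : ℝ)⁻¹ • (q.1 + q.2)
  have hmid : Tendsto mid F (𝓝 x) := by
    have hcont : ContinuousAt mid (x, x) := by fun_prop
    have hx : mid (x, x) = x := by simp only [mid]; module
    rw [ContinuousAt, hx] at hcont
    exact hcont.mono_left nhdsWithin_le_nhds
  have hσ : Tendsto (fun q : EuclideanSpace ℝ (Fin 2) × EuclideanSpace ℝ (Fin 2) =>
      ‖(2 : ℝ)⁻¹ • (q.1 - q.2)‖ ^ 2) F (𝓝[>] 0) := by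
    have h := tendsto_nhdsWithin_iff.1 (tendsto_norm_half_smul_sub_nhdsWithin x)
    exact tendsto_nhdsWithin_iff.2
      ⟨by simpa using h.1.pow 2, h.2.mono fun q hq => pow_pos (mem_Ioi.1 hq) 2⟩
  have hlim : Tendsto (fun p : (EuclideanSpace ℝ (Fin 2) × EuclideanSpace ℝ (Fin 2)) × ℝ =>
      gaussConv μ (t - p.2 / 2) (mid p.1)) (F ×ˢ 𝓝[>] 0) (𝓝 (gaussConv μ t x)) := by
    have htime : Tendsto (fun τ : ℝ => t - τ / 2) (𝓝[>] 0) (𝓝 t) := by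
      have hcont : ContinuousAt (fun τ : ℝ => t - τ / 2) 0 := by fun_prop
      simpa [ContinuousAt] using hcont.tendsto.mono_left nhdsWithin_le_nhds
    exact tendsto_gaussConv ht hts hμ (htime.comp tendsto_snd) (hmid.comp tendsto_fst)
  obtain ⟨C, hC⟩ := exists_gaussConv_le (R := ‖x‖ + 1) (half_pos ht) hts hμ
  have hbound : ∀ᶠ q in F, ∀ τ ∈ Ioo 0 t, ‖gaussConv μ (t - τ / 2) (mid q)‖ ≤ C := by
    filter_upwards [hmid.norm.eventually_lt_const (lt_add_one _)] with q hq τ ⟨hτ₀, hτt⟩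
    exact hC _ ⟨by linarith, by linarith⟩ _ hq.le
  refine ((tendsto_integral_inv_mul_exp_neg_div_smul ht hσ
    (fun q => (by fun_prop : Measurable _).stronglyMeasurable) hbound hlim).const_mul
      Real.pi⁻¹).congr' ?_
  filter_upwards [self_mem_nhdsWithin] with q hq
  rw [gaussQConv_two_eq_integral_gaussConv ht hts hμ hq, Real.log_pow, abs_mul]
  simp only [smul_eq_mul, Nat.cast_ofNat, Nat.abs_ofNat]
  ring

lemma tendsto_gaussSecondMoment_div_abs_log (ht : 0 < t) (hts : t < s)
    (hμ : Integrable (gaussDensity 2 s) μ) (x : EuclideanSpace ℝ (Fin 2)) :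
    Tendsto (fun q : EuclideanSpace ℝ (Fin 2) × EuclideanSpace ℝ (Fin 2) =>
        gaussSecondMoment μ t q / |Real.log ‖(2 : ℝ)⁻¹ • (q.1 - q.2)‖|)
      (𝓝[{q | q.1 ≠ q.2}] (x, x)) (𝓝 (Real.pi⁻¹ * gaussConv μ t x)) := by
  have hlog : Tendsto (fun q : EuclideanSpace ℝ (Fin 2) × EuclideanSpace ℝ (Fin 2) =>
      |Real.log ‖(2 : ℝ)⁻¹ • (q.1 - q.2)‖|) (𝓝[{q | q.1 ≠ q.2}] (x, x)) atTop :=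
    tendsto_abs_atBot_atTop.comp <|
      Real.tendsto_log_nhdsGT_zero.comp (tendsto_norm_half_smul_sub_nhdsWithin x)
  have hfst : Tendsto Prod.fst (𝓝[{q : EuclideanSpace ℝ (Fin 2) × EuclideanSpace ℝ (Fin 2) |
      q.1 ≠ q.2}] (x, x)) (𝓝 x) := (continuous_fst.tendsto (x, x)).mono_left nhdsWithin_le_nhds
  have hsnd : Tendsto Prod.snd (𝓝[{q : EuclideanSpace ℝ (Fin 2) × EuclideanSpace ℝ (Fin 2) |
      q.1 ≠ q.2}] (x, x)) (𝓝 x) := (continuous_snd.tendsto (x, x)).mono_left nhdsWithin_le_nhds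
  have hprod := (tendsto_gaussConv ht hts hμ tendsto_const_nhds hfst).mul
    (tendsto_gaussConv ht hts hμ tendsto_const_nhds hsnd)
  simpa only [gaussSecondMoment, add_div, zero_add] using
    (hprod.div_atTop hlog).add (tendsto_gaussQConv_div_abs_log ht hts hμ x)

end DimTwo

section LogNormLinear

variable {V : Type*} [NormedAddCommGroup V] [NormedSpace ℝ V]
  {W : Type*} [NormedAddCommGroup W] [NormedSpace ℝ W]

lemma tendsto_abs_log_mul_div_abs_log {ρ : ℝ} (hρ : ρ ≠ 0) :
    Tendsto (fun ε => |Real.log (ε * ρ)| / |Real.log ε|) (𝓝[>] 0) (𝓝 1) := by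
  have h : Tendsto (fun ε => 1 + Real.log ρ / Real.log ε) (𝓝[>] 0) (𝓝 1) := by
    simpa using tendsto_const_nhds.add
      ((tendsto_const_nhds (x := Real.log ρ)).div_atBot Real.tendsto_log_nhdsGT_zero)
  rw [← abs_one]
  refine h.abs.congr' ?_
  filter_upwards [Real.tendsto_log_nhdsGT_zero.eventually_lt_atBot 0, self_mem_nhdsWithin]
    with ε hε hε₀
  rw [Real.log_mul (mem_Ioi.1 hε₀).ne' hρ, ← abs_div, add_div, div_self hε.ne]

lemma eventually_abs_le_mul_abs_log {A : V →L[ℝ] W} {G : V → ℝ} {L : ℝ}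
    (hG : Tendsto (fun v => G v / |Real.log ‖A v‖|) (𝓝[{v | A v ≠ 0}] 0) (𝓝 L)) :
    ∀ᶠ v in 𝓝[{v | A v ≠ 0}] 0, |G v| ≤ (|L| + 1) * |Real.log ‖A v‖| := by
  have hA : Tendsto (fun v => ‖A v‖) (𝓝[{v | A v ≠ 0}] 0) (𝓝 0) := by
    simpa using (A.continuous.norm.tendsto 0).mono_left nhdsWithin_le_nhds
  filter_upwards [hG.abs.eventually_le_const (lt_add_one |L|), hA.eventually_lt_const one_pos,
    self_mem_nhdsWithin] with v hv hlt hne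
  have hlog : 0 < |Real.log ‖A v‖| := abs_pos.2 (Real.log_neg (norm_pos_iff.2 hne) hlt).ne
  rwa [abs_div, abs_abs, div_le_iff₀ hlog] at hv

lemma tendsto_inv_abs_log_mul_comp_smul {A : V →L[ℝ] W} {G : V → ℝ} {L : ℝ}
    (hG : Tendsto (fun v => G v / |Real.log ‖A v‖|) (𝓝[{v | A v ≠ 0}] 0) (𝓝 L))
    {v : V} (hv : A v ≠ 0) :
    Tendsto (fun ε : ℝ => |Real.log ε|⁻¹ * G (ε • v)) (𝓝[>] 0) (𝓝 L) := by
  have hpos : 0 < ‖A v‖ := norm_pos_iff.2 hv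
  have hsmul : Tendsto (fun ε : ℝ => ε • v) (𝓝[>] 0) (𝓝[{v | A v ≠ 0}] 0) := by
    refine tendsto_nhdsWithin_iff.2 ⟨?_, ?_⟩
    · have hcont : ContinuousAt (fun ε : ℝ => ε • v) 0 := by fun_prop
      simpa [ContinuousAt] using hcont.tendsto.mono_left nhdsWithin_le_nhds
    · filter_upwards [self_mem_nhdsWithin] with ε hε
      simpa [hv] using (mem_Ioi.1 hε).ne'
  have hratio := (hG.comp hsmul).mul (tendsto_abs_log_mul_div_abs_log hpos.ne')
  rw [mul_one] at hratio
  refine hratio.congr' ?_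
  filter_upwards [self_mem_nhdsWithin, Ioo_mem_nhdsGT (inv_pos.2 hpos)] with ε hε hε₁
  have hlog : Real.log (ε * ‖A v‖) ≠ 0 :=
    (Real.log_neg (mul_pos hε hpos) ((lt_inv_mul_iff₀ hpos).1 (by simpa using hε₁.2)
      |>.trans_eq' (mul_comm _ _))).ne
  simp only [Function.comp_apply, map_smul, norm_smul, Real.norm_of_nonneg (mem_Ioi.1 hε).le]
  field_simp

lemma eventually_abs_inv_abs_log_mul_comp_smul_le {A : V →L[ℝ] W} {G : V → ℝ} {L : ℝ}
    (hG : Tendsto (fun v => G v / |Real.log ‖A v‖|) (𝓝[{v | A v ≠ 0}] 0) (𝓝 L)) (R : ℝ) :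
    ∀ᶠ ε in 𝓝[>] (0 : ℝ), ∀ v ∈ Metric.closedBall (0 : V) R, A v ≠ 0 →
      |(|Real.log ε|⁻¹ * G (ε • v))| ≤ (|L| + 1) * (1 + |Real.log ‖A v‖|) := by
  obtain ⟨δ, hδ, hball⟩ := Metric.eventually_nhds_iff_ball.1
    (eventually_nhdsWithin_iff.1 (eventually_abs_le_mul_abs_log hG))
  have hsmall : Tendsto (fun ε : ℝ => ε * R) (𝓝[>] 0) (𝓝 0) := by
    simpa using (tendsto_id.mul_const R).mono_left (nhdsWithin_le_nhds (a := (0 : ℝ)))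
  have hlarge : Tendsto (fun ε : ℝ => |Real.log ε|) (𝓝[>] 0) atTop :=
    tendsto_abs_atBot_atTop.comp Real.tendsto_log_nhdsGT_zero
  filter_upwards [self_mem_nhdsWithin, hsmall.eventually_lt_const hδ,
    hlarge.eventually_ge_atTop 1] with ε hε hεR hlog v hv hAv
  have hε₀ : 0 < ε := hε
  have hmem : ε • v ∈ Metric.ball (0 : V) δ := by
    rw [mem_ball_zero_iff, norm_smul, Real.norm_of_nonneg hε₀.le]
    exact (mul_le_mul_of_nonneg_left (mem_closedBall_zero_iff.1 hv) hε₀.le).trans_lt hεR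
  have hAεv : A (ε • v) ≠ 0 := by simpa [hAv] using hε₀.ne'
  have hadd : |Real.log ‖A (ε • v)‖| ≤ |Real.log ε| + |Real.log ‖A v‖| := by
    rw [map_smul, norm_smul, Real.norm_of_nonneg hε₀.le,
      Real.log_mul hε₀.ne' (norm_ne_zero_iff.2 hAv)]
    exact abs_add_le _ _
  have hmul : |Real.log ε| + |Real.log ‖A v‖| ≤ (1 + |Real.log ‖A v‖|) * |Real.log ε| := by
    nlinarith [abs_nonneg (Real.log ‖A v‖)]
  rw [abs_mul, abs_inv, abs_abs, inv_mul_le_iff₀ (one_pos.trans_le hlog)]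
  calc |G (ε • v)| ≤ (|L| + 1) * |Real.log ‖A (ε • v)‖| := hball _ hmem hAεv
    _ ≤ (|L| + 1) * ((1 + |Real.log ‖A v‖|) * |Real.log ε|) := by
        gcongr
        exact hadd.trans hmul
    _ = |Real.log ε| * ((|L| + 1) * (1 + |Real.log ‖A v‖|)) := by ring

variable [FiniteDimensional ℝ V] [MeasurableSpace V] [BorelSpace V] {ν : Measure V}
  [ν.IsAddHaarMeasure]

lemma ae_apply_ne_zero {A : V →L[ℝ] W} (hA : A ≠ 0) : ∀ᵐ v ∂ν, A v ≠ 0 := by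
  have hker : LinearMap.ker A.toLinearMap ≠ ⊤ := fun h =>
    hA (ContinuousLinearMap.coe_inj.1 (LinearMap.ker_eq_top.1 h))
  exact measure_eq_zero_iff_ae_notMem.1 (Measure.addHaar_submodule ν _ hker)

lemma setLIntegral_closedBall_comp_le (φ : V →L[ℝ] ℝ) {v₀ : V} (hv₀ : φ v₀ = 1) (r : ℝ)
    {h : ℝ → ENNReal} (hh : Measurable h) :
    ∫⁻ v in Metric.closedBall 0 r, h (φ v) ∂ν ≤
      ν (Metric.closedBall 0 (r + ‖v₀‖)) * ∫⁻ y, h y := by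
  -- Averaging over translations by `a • v₀`, `a ∈ [0, 1]`, makes `φ v` run over an interval.
  have htranslate (a : ℝ) (ha : a ∈ Icc (0 : ℝ) 1) :
      ∫⁻ v in Metric.closedBall 0 r, h (φ v) ∂ν ≤
        ∫⁻ v in Metric.closedBall 0 (r + ‖v₀‖), h (φ v + a) ∂ν := by
    rw [← lintegral_indicator Metric.isClosed_closedBall.measurableSet,
      ← lintegral_indicator Metric.isClosed_closedBall.measurableSet,
      ← lintegral_add_right_eq_self _ (a • v₀)]
    refine lintegral_mono fun v => indicator_apply_le' (fun hv => ?_) fun _ => zero_le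
    have hv' : v ∈ Metric.closedBall (0 : V) (r + ‖v₀‖) := by
      rw [mem_closedBall_zero_iff] at hv ⊢
      calc ‖v‖ ≤ ‖v + a • v₀‖ + ‖a • v₀‖ := norm_le_add_norm_add v (a • v₀)
        _ ≤ r + ‖v₀‖ := by
          rw [norm_smul, Real.norm_of_nonneg ha.1]
          exact add_le_add hv (mul_le_of_le_one_left (norm_nonneg v₀) ha.2)
    simp [hv', hv₀]
  calc ∫⁻ v in Metric.closedBall 0 r, h (φ v) ∂ν
      = ∫⁻ _ in Icc (0 : ℝ) 1, ∫⁻ v in Metric.closedBall 0 r, h (φ v) ∂ν := by simp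
    _ ≤ ∫⁻ a in Icc (0 : ℝ) 1, ∫⁻ v in Metric.closedBall 0 (r + ‖v₀‖), h (φ v + a) ∂ν :=
        setLIntegral_mono' measurableSet_Icc htranslate
    _ = ∫⁻ v in Metric.closedBall 0 (r + ‖v₀‖), (∫⁻ a in Icc (0 : ℝ) 1, h (φ v + a)) ∂ν :=
        lintegral_lintegral_swap (by fun_prop)
    _ ≤ ∫⁻ _ in Metric.closedBall 0 (r + ‖v₀‖), (∫⁻ y, h y) ∂ν :=
        lintegral_mono fun v => (setLIntegral_le_lintegral _ _).trans_eq
          (lintegral_add_left_eq_self h (φ v))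
    _ = ν (Metric.closedBall 0 (r + ‖v₀‖)) * ∫⁻ y, h y := by
        rw [setLIntegral_const, mul_comm]

lemma locallyIntegrable_log_apply {φ : V →L[ℝ] ℝ} (hφ : φ ≠ 0) :
    LocallyIntegrable (fun v => Real.log (φ v)) ν := by
  obtain ⟨v₀, hv₀⟩ : ∃ v₀, φ v₀ = 1 :=
    φ.toLinearMap.surjective (fun h => hφ (ContinuousLinearMap.coe_inj.1 h)) 1
  refine locallyIntegrable_iff.2 fun K hK => ?_
  obtain ⟨r, hr⟩ := hK.isBounded.subset_closedBall 0
  refine IntegrableOn.mono_set ⟨(by fun_prop : Measurable _).aestronglyMeasurable, ?_⟩ hr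
  set T : Set ℝ := uIcc (-(‖φ‖ * r)) (‖φ‖ * r)
  have hT : ∀ v ∈ Metric.closedBall (0 : V) r, φ v ∈ T := fun v hv =>
    Icc_subset_uIcc (abs_le.1 (φ.le_opNorm_of_le (mem_closedBall_zero_iff.1 hv)))
  have hlog : IntegrableOn Real.log T :=
    (intervalIntegrable_iff' (by finiteness)).1 intervalIntegral.intervalIntegrable_log'
  calc ∫⁻ v in Metric.closedBall 0 r, ‖Real.log (φ v)‖ₑ ∂ν
      = ∫⁻ v in Metric.closedBall 0 r, T.indicator (fun y => ‖Real.log y‖ₑ) (φ v) ∂ν :=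
        setLIntegral_congr_fun Metric.isClosed_closedBall.measurableSet fun v hv => by
          simp only [indicator_of_mem (hT v hv)]
    _ ≤ ν (Metric.closedBall 0 (r + ‖v₀‖)) * ∫⁻ y, T.indicator (fun y => ‖Real.log y‖ₑ) y :=
        setLIntegral_closedBall_comp_le φ hv₀ r
          ((by fun_prop : Measurable fun y => ‖Real.log y‖ₑ).indicator measurableSet_uIcc)
    _ = ν (Metric.closedBall 0 (r + ‖v₀‖)) * ∫⁻ y in T, ‖Real.log y‖ₑ := by
        rw [lintegral_indicator measurableSet_uIcc]
    _ < ⊤ := ENNReal.mul_lt_top measure_closedBall_lt_top hlog.2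

lemma locallyIntegrable_log_norm_apply {A : V →L[ℝ] W} (hA : A ≠ 0) :
    LocallyIntegrable (fun v => Real.log ‖A v‖) ν := by
  obtain ⟨w, hw⟩ : ∃ w, A w ≠ 0 := by
    by_contra! h
    exact hA (ContinuousLinearMap.ext h)
  obtain ⟨ψ, hψ, hψw⟩ := exists_dual_vector ℝ (A w) (norm_ne_zero_iff.2 hw)
  have hφ : ψ.comp A ≠ 0 := fun h => hw <| by simpa [hψw] using DFunLike.congr_fun h w
  have hle (v : V) : |ψ (A v)| ≤ ‖A v‖ := by simpa [hψ] using ψ.le_opNorm (A v)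
  have hnorm : LocallyIntegrable (fun v => ‖A v‖) ν := A.continuous.norm.locallyIntegrable
  have hlog : LocallyIntegrable (fun v => |Real.log (ψ (A v))|) ν := fun v =>
    (locallyIntegrable_log_apply hφ v).norm
  refine (hlog.add hnorm).mono
    A.continuous.norm.measurable.log.aestronglyMeasurable ?_
  filter_upwards [ae_apply_ne_zero hφ] with v hv
  have hpos : 0 < |ψ (A v)| := abs_pos.2 hv
  simp only [Pi.add_apply, Real.norm_eq_abs]
  refine (abs_le.2 ⟨?_, ?_⟩).trans (le_abs_self _)
  · have := Real.log_le_log hpos (hle v)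
    rw [Real.log_abs] at this
    linarith [neg_abs_le (Real.log (ψ (A v))), norm_nonneg (A v)]
  · linarith [Real.log_le_self (norm_nonneg (A v)), abs_nonneg (Real.log (ψ (A v)))]

theorem tendsto_integral_smul_comp_inv_smul {A : V →L[ℝ] W} (hA : A ≠ 0) {G : V → ℝ}
    (hGm : Measurable G) {L M : ℝ}
    (hG : Tendsto (fun v => G v / |Real.log ‖A v‖|) (𝓝[{v | A v ≠ 0}] 0) (𝓝 L))
    {F : Type*} [NormedAddCommGroup F] [NormedSpace ℝ F] {f : V → F} (hf : AEStronglyMeasurable f ν)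
    (hM : ∀ v, ‖f v‖ ≤ M) (hsupp : Bornology.IsBounded (Function.support f)) :
    Tendsto (fun ε : ℝ => ((ε ^ Module.finrank ℝ V)⁻¹ * |Real.log ε|⁻¹) •
        ∫ u, G u • f (ε⁻¹ • u) ∂ν) (𝓝[>] 0) (𝓝 (L • ∫ v, f v ∂ν)) := by
  obtain ⟨R, hR⟩ := hsupp.subset_closedBall 0
  set B : V → ℝ := (Metric.closedBall 0 R).indicator
    fun v => (|L| + 1) * (1 + |Real.log ‖A v‖|) * M
  have hB : Integrable B ν := by
    have hlog := (locallyIntegrable_log_norm_apply (ν := ν) hA).integrableOn_isCompact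
      (isCompact_closedBall 0 R)
    have hone : IntegrableOn (fun _ => (1 : ℝ)) (Metric.closedBall (0 : V) R) ν :=
      integrableOn_const measure_closedBall_lt_top.ne
    exact (integrable_indicator_iff Metric.isClosed_closedBall.measurableSet).2
      (((hone.add hlog.abs).const_mul _).mul_const _)
  have hscale {ε : ℝ} (hε : 0 < ε) :
      ((ε ^ Module.finrank ℝ V)⁻¹ * |Real.log ε|⁻¹) • ∫ u, G u • f (ε⁻¹ • u) ∂ν =
        ∫ v, (|Real.log ε|⁻¹ * G (ε • v)) • f v ∂ν := by
    have h := Measure.integral_comp_inv_smul_of_nonneg ν (fun v => G (ε • v) • f v) hε.le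
    simp only [smul_inv_smul₀ hε.ne'] at h
    rw [h, mul_comm, mul_smul, inv_smul_smul₀ (pow_pos hε _).ne', ← integral_smul]
    simp only [mul_smul]
  rw [← integral_smul]
  refine (tendsto_integral_filter_of_dominated_convergence B
    (F := fun ε v => (|Real.log ε|⁻¹ * G (ε • v)) • f v)
    (.of_forall fun ε => ?_) ?_ hB ?_).congr' ?_
  · exact ((hGm.comp (measurable_const_smul ε)).const_mul _).aestronglyMeasurable.smul hf
  · filter_upwards [eventually_abs_inv_abs_log_mul_comp_smul_le hG R] with ε hε
    filter_upwards [ae_apply_ne_zero hA] with v hv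
    by_cases hvR : v ∈ Metric.closedBall 0 R
    · simp only [B, indicator_of_mem hvR, norm_smul, Real.norm_eq_abs]
      exact mul_le_mul (hε v hvR hv) (hM v) (norm_nonneg _) (by positivity)
    · have hfv : f v = 0 := Function.notMem_support.1 fun h => hvR (hR h)
      simp [B, hvR, hfv]
  · filter_upwards [ae_apply_ne_zero hA] with v hv
    exact (tendsto_inv_abs_log_mul_comp_smul hG hv).smul_const (f v)
  · filter_upwards [self_mem_nhdsWithin] with ε hε
    exact (hscale hε).symm

end LogNormLinear

theorem gauss_second_moment_scaling_dim_two_general {μ : Measure (EuclideanSpace ℝ (Fin 2))}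
    {s t : ℝ} (ht : 0 < t) (hts : t < s) (hμ : Integrable (gaussDensity 2 s) μ) :
    (∀ x, Tendsto (fun q : EuclideanSpace ℝ (Fin 2) × EuclideanSpace ℝ (Fin 2) =>
        gaussQConv μ t q.1 q.2 / |Real.log ‖(2 : ℝ)⁻¹ • (q.1 - q.2)‖|)
      (𝓝[{q | q.1 ≠ q.2}] (x, x)) (𝓝 (Real.pi⁻¹ * gaussConv μ t x))) ∧
    ∀ {F : Type*} [NormedAddCommGroup F] [NormedSpace ℝ F]
      (f : EuclideanSpace ℝ (Fin 2) × EuclideanSpace ℝ (Fin 2) → F) (M : ℝ),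
      AEStronglyMeasurable f → (∀ u, ‖f u‖ ≤ M) → Bornology.IsBounded (Function.support f) →
      Tendsto (fun ε : ℝ => ((ε ^ 4)⁻¹ * |Real.log ε|⁻¹) •
          ∫ u, gaussSecondMoment μ t u • f (ε⁻¹ • u))
        (𝓝[>] 0) (𝓝 ((Real.pi⁻¹ * gaussConv μ t 0) • ∫ u, f u)) := by
  have := sigmaFinite_of_integrable_gaussDensity (ht.trans hts) hμ
  refine ⟨tendsto_gaussQConv_div_abs_log ht hts hμ, fun {F} _ _ f M hf hM hsupp => ?_⟩
  have : (volume : Measure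
      (EuclideanSpace ℝ (Fin 2) × EuclideanSpace ℝ (Fin 2))).IsAddHaarMeasure :=
    Measure.prod.instIsAddHaarMeasure volume volume
  set A : EuclideanSpace ℝ (Fin 2) × EuclideanSpace ℝ (Fin 2) →L[ℝ] EuclideanSpace ℝ (Fin 2) :=
    (2 : ℝ)⁻¹ • (ContinuousLinearMap.fst ℝ _ _ - ContinuousLinearMap.snd ℝ _ _)
  have hA (q) : A q = (2 : ℝ)⁻¹ • (q.1 - q.2) := rfl
  have hoff : {q | A q ≠ 0} = {q | q.1 ≠ q.2} := by ext q; simp [hA, sub_eq_zero]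
  have hA₀ : A ≠ 0 := by
    obtain ⟨v, hv⟩ := exists_ne (0 : EuclideanSpace ℝ (Fin 2))
    exact fun h => hv (by simpa [hA] using DFunLike.congr_fun h (v, 0))
  have hlim := tendsto_gaussSecondMoment_div_abs_log ht hts hμ 0
  rw [← hoff, ← Prod.zero_eq_mk] at hlim
  simpa only [Module.finrank_prod, finrank_euclideanSpace_fin, Nat.reduceAdd] using
    tendsto_integral_smul_comp_inv_smul hA₀ (measurable_gaussSecondMoment t) hlim hf hM hsupp

/-- **Lemma 3.4.** There is a universal constant `c > 0` — the same constant as in the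
asymptotics `(μ * q_t)(x₁, x₂) ~ c (μ * p_t)(x) |log |r||` — such that for every σ-finite
`μ` on `ℝ²` with `μ p_s < ∞` for all `s > 0`, every `t > 0`, and every bounded measurable
`f ≥ 0` on `ℝ² × ℝ²` with bounded support, writing
`g_t(x₁, x₂) = (μ * p_t)(x₁)(μ * p_t)(x₂) + (μ * q_t)(x₁, x₂)` for the second-moment
density, one has
`ε^{-4} |log ε|⁻¹ ∫ f(u/ε) g_t(u) du → c (μ p_t) ∫ f dλ⁴` as `ε → 0+`. -/
theorem gauss_second_moment_scaling_dim_two :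
    ∃ c : ℝ, 0 < c ∧
      (∀ (μ : Measure (EuclideanSpace ℝ (Fin 2))), SigmaFinite μ →
        (∀ s : ℝ, 0 < s → ∫⁻ u, ENNReal.ofReal (gaussDensity 2 s u) ∂μ < ⊤) →
        ∀ t : ℝ, 0 < t → ∀ x : EuclideanSpace ℝ (Fin 2),
        Tendsto
          (fun q : EuclideanSpace ℝ (Fin 2) × EuclideanSpace ℝ (Fin 2) =>
            (∫⁻ u, ENNReal.ofReal (gaussQ 2 t (q.1 - u) (q.2 - u)) ∂μ).toReal /
              |Real.log ‖(2:ℝ)⁻¹ • (q.1 - q.2)‖|)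
          (nhdsWithin (x, x)
            {q : EuclideanSpace ℝ (Fin 2) × EuclideanSpace ℝ (Fin 2) | q.1 ≠ q.2})
          (nhds (c * (∫⁻ u, ENNReal.ofReal (gaussDensity 2 t (x - u)) ∂μ).toReal))) ∧
      (∀ (μ : Measure (EuclideanSpace ℝ (Fin 2))), SigmaFinite μ →
        (∀ s : ℝ, 0 < s → ∫⁻ u, ENNReal.ofReal (gaussDensity 2 s u) ∂μ < ⊤) →
        ∀ t : ℝ, 0 < t →
        ∀ f : EuclideanSpace ℝ (Fin 2) × EuclideanSpace ℝ (Fin 2) → ℝ,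
        Measurable f → (∀ u, 0 ≤ f u) → (∃ M : ℝ, ∀ u, f u ≤ M) →
        Bornology.IsBounded (Function.support f) →
        Tendsto
          (fun ε : ℝ =>
            (ε ^ 4)⁻¹ * |Real.log ε|⁻¹ *
              ∫ u : EuclideanSpace ℝ (Fin 2) × EuclideanSpace ℝ (Fin 2),
                f (ε⁻¹ • u) *
                  ((∫⁻ v, ENNReal.ofReal (gaussDensity 2 t (u.1 - v)) ∂μ).toReal *
                      (∫⁻ v, ENNReal.ofReal (gaussDensity 2 t (u.2 - v)) ∂μ).toReal +
                    (∫⁻ v, ENNReal.ofReal (gaussQ 2 t (u.1 - v) (u.2 - v)) ∂μ).toReal))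
          (nhdsWithin 0 (Set.Ioi (0:ℝ)))
          (nhds (c * (∫⁻ u, ENNReal.ofReal (gaussDensity 2 t u) ∂μ).toReal *
            ∫ u : EuclideanSpace ℝ (Fin 2) × EuclideanSpace ℝ (Fin 2), f u))) := by
  have hdensity {μ : Measure (EuclideanSpace ℝ (Fin 2))} {t : ℝ} (ht : 0 < t)
      (hμ : ∀ s, 0 < s → ∫⁻ u, ENNReal.ofReal (gaussDensity 2 s u) ∂μ < ⊤) :
      Integrable (gaussDensity 2 (2 * t)) μ :=
    integrable_gaussDensity_of_lintegral_lt_top (by positivity) (hμ (2 * t) (by positivity))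
  refine ⟨Real.pi⁻¹, by positivity, fun μ _ hμ t ht => ?_,
    fun μ _ hμ t ht f hf hf₀ ⟨M, hM⟩ hsupp => ?_⟩
  · exact (gauss_second_moment_scaling_dim_two_general.{0} ht (lt_two_mul_self ht)
      (hdensity ht hμ)).1
  · simp only [mul_comm (f _), ← gaussConv_zero]
    exact (gauss_second_moment_scaling_dim_two_general ht (lt_two_mul_self ht)
      (hdensity ht hμ)).2 f M hf.aestronglyMeasurable
        (fun u => (Real.norm_of_nonneg (hf₀ u)).trans_le (hM u)) hsupp
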